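/- For every finite set {B₁, …, B_k} of finite algebras in the language {∧, ∨, *, ⁺, 0, 1} with the property that a quasi-identity is valid in all of B₁, …, B_k if and only if it is admissible in dS, one has [8] ≤_m [|B₁|, …, |B_k|] in the multiset ordering. -/

import Mathlib

/-!
Let `P` be the eight-element algebra `dS × 2`. It is generated by `x = (a, 0)` and `y = (b, 0)`,
which satisfy `x ∧ y ≈ x`, `x* ≈ y*` and `y⁺ ≈ 1`; its elements are the values of the eight terms
`testTerm j`. The algebra `P` embeds into the free algebra on two generators: on the Boolean
component where both generators `u`, `v` are different from `0` and `1`, the chain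
`0 < u ∧ v < u ∨ v < 1` is a copy of `dS`. Hence these relations do not admissibly
imply `x ≈ y` (`not_admissible`).

On the other hand, every nontrivial algebra in the quasivariety of the free algebra maps onto `2`, but
`dS` and its three-element quotient do not; so any proper quotient of `P` in this quasivariety
identifies `x` and `y`. In terms of quasi-identities: adding to the relations any equation between
two distinct terms `testTerm j`, `testTerm l` makes `x ≈ y` an admissible consequence
(`admissible_of_ne`).

Consequently some `B i` has an assignment satisfying the relations and separating `x` from `y`, and
there the eight terms take eight different values. So `8 ≤ |B i|`, which is what the
multiset inequality amounts to.
-/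

/-- Terms in the language {∧, ∨, *, ⁺, 0, 1} over a set `V` of variables. -/
inductive DSTerm (V : Type) : Type
  | var : V → DSTerm V
  | meet : DSTerm V → DSTerm V → DSTerm V
  | join : DSTerm V → DSTerm V → DSTerm V
  | star : DSTerm V → DSTerm V   -- pseudocomplement *
  | plus : DSTerm V → DSTerm V   -- dual pseudocomplement ⁺
  | zero : DSTerm V
  | one : DSTerm V

/-- An algebra in the language {∧, ∨, *, ⁺, 0, 1}. -/
structure DSAlg where
  carrier : Type
  meet : carrier → carrier → carrier
  join : carrier → carrier → carrier
  star : carrier → carrier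
  plus : carrier → carrier
  zero : carrier
  one : carrier

/-- Evaluation of a term in an algebra under an assignment of the variables. -/
def DSTerm.eval {V : Type} (A : DSAlg) (v : V → A.carrier) : DSTerm V → A.carrier
  | .var x => v x
  | .meet t s => A.meet (t.eval A v) (s.eval A v)
  | .join t s => A.join (t.eval A v) (s.eval A v)
  | .star t => A.star (t.eval A v)
  | .plus t => A.plus (t.eval A v)
  | .zero => A.zero
  | .one => A.one

/-- Substitution of terms for variables. -/
def DSTerm.subst {V W : Type} (s : V → DSTerm W) : DSTerm V → DSTerm W
  | .var x => s x
  | .meet t u => .meet (t.subst s) (u.subst s)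
  | .join t u => .join (t.subst s) (u.subst s)
  | .star t => .star (t.subst s)
  | .plus t => .plus (t.subst s)
  | .zero => .zero
  | .one => .one

/-- Validity of the identity `φ ≈ ψ` in the algebra `A`. -/
def DSIdValid {V : Type} (A : DSAlg) (φ ψ : DSTerm V) : Prop :=
  ∀ v : V → A.carrier, φ.eval A v = ψ.eval A v

/-- Validity of the quasi-identity `Γ ⇒ φ ≈ ψ` in the algebra `A`. -/
def DSQValid (A : DSAlg) (Γ : List (DSTerm ℕ × DSTerm ℕ)) (φ ψ : DSTerm ℕ) : Prop :=
  ∀ v : ℕ → A.carrier,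
    (∀ p ∈ Γ, p.1.eval A v = p.2.eval A v) → φ.eval A v = ψ.eval A v

/-- Admissibility of the quasi-identity `Γ ⇒ φ ≈ ψ` in the algebra `M`. -/
def DSAdmissible (M : DSAlg) (Γ : List (DSTerm ℕ × DSTerm ℕ)) (φ ψ : DSTerm ℕ) : Prop :=
  ∀ s : ℕ → DSTerm ℕ,
    (∀ p ∈ Γ, DSIdValid M (p.1.subst s) (p.2.subst s)) →
    DSIdValid M (φ.subst s) (ψ.subst s)

/-- dS: the four-element double Stone algebra on the chain 0 < a < b < 1
(as `Fin 4`), with 0* = 1, x* = 0 for x ≠ 0, 1⁺ = 0, x⁺ = 1 for x ≠ 1. -/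
def dSalg : DSAlg := ⟨Fin 4, min, max, ![3, 0, 0, 0], ![3, 3, 3, 0], 0, 3⟩

/-- The Dershowitz–Manna multiset ordering (induced by the usual order on `ℕ`). -/
def MultisetLE (N N' : Multiset ℕ) : Prop :=
  ∀ x : ℕ, N'.count x < N.count x → ∃ y : ℕ, x < y ∧ N.count y < N'.count y

theorem DSTerm.eval_subst {V W : Type} (A : DSAlg) (s : V → DSTerm W) (w : W → A.carrier)
    (t : DSTerm V) : (t.subst s).eval A w = t.eval A (fun n => (s n).eval A w) := by
  induction t <;> simp_all [DSTerm.eval, DSTerm.subst]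

/-- `{0, 1}` is a subalgebra of `dS`: under the assignment with constant value `0`, every term
evaluates to `0` or `1` (encoded as `0` and `3` in `Fin 4`). -/
theorem eval_zero_boolean {V : Type} (t : DSTerm V) :
    t.eval dSalg (fun _ => (0 : Fin 4)) = (0 : Fin 4) ∨
      t.eval dSalg (fun _ => (0 : Fin 4)) = (3 : Fin 4) := by
  have hmeet : ∀ p q : Fin 4, (p = 0 ∨ p = 3) → (q = 0 ∨ q = 3) →
      (min p q = 0 ∨ min p q = 3) := by decide
  have hjoin : ∀ p q : Fin 4, (p = 0 ∨ p = 3) → (q = 0 ∨ q = 3) →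
      (max p q = 0 ∨ max p q = 3) := by decide
  have hstar : ∀ p : Fin 4, (p = 0 ∨ p = 3) →
      ((![3, 0, 0, 0] : Fin 4 → Fin 4) p = 0 ∨ (![3, 0, 0, 0] : Fin 4 → Fin 4) p = 3) := by
    decide
  have hplus : ∀ p : Fin 4, (p = 0 ∨ p = 3) →
      ((![3, 3, 3, 0] : Fin 4 → Fin 4) p = 0 ∨ (![3, 3, 3, 0] : Fin 4 → Fin 4) p = 3) := by
    decide
  induction t with
  | var x => exact Or.inl rfl
  | meet t u iht ihu => exact hmeet _ _ iht ihu
  | join t u iht ihu => exact hjoin _ _ iht ihu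
  | star t ih => exact hstar _ ih
  | plus t ih => exact hplus _ ih
  | zero => exact Or.inl rfl
  | one => exact Or.inr rfl

/-- The relations `x ∧ y ≈ x`, `x* ≈ y*`, `y⁺ ≈ 1`, which hold for the generators `x = (a, 0)` and
`y = (b, 0)` of `dS × 2`. The variables `x`, `y` are numbered `0`, `1`. -/
def relations : List (DSTerm ℕ × DSTerm ℕ) :=
  [(.meet (.var 0) (.var 1), .var 0),
   (.star (.var 0), .star (.var 1)),
   (.plus (.var 1), .one)]

/-- Eight terms whose values at `x = (a, 0)`, `y = (b, 0)` are the eight elements of `dS × 2`. -/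
def testTerm : Fin 8 → DSTerm ℕ :=
  ![.zero, .one, .star (.var 0), .star (.star (.var 0)), .var 0, .var 1,
    .join (.var 0) (.star (.var 0)), .join (.var 1) (.star (.var 0))]

/-- The solutions of the relations in `dS` are `(0, 0)`, `(a, a)`, `(a, b)`, `(b, b)`: the second
coordinate is never `1`, and the only solution with distinct coordinates is `(a, b)`. -/
theorem relations_dS (v : ℕ → Fin 4)
    (h : ∀ p ∈ relations, p.1.eval dSalg v = p.2.eval dSalg v) :
    v 1 ≠ 3 ∧ (v 0 ≠ v 1 → v 0 = 1 ∧ v 1 = 2) := by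
  have h1 : min (v 0) (v 1) = v 0 := h (.meet (.var 0) (.var 1), .var 0) (by simp [relations])
  have h2 : (![3, 0, 0, 0] : Fin 4 → Fin 4) (v 0) = (![3, 0, 0, 0] : Fin 4 → Fin 4) (v 1) :=
    h (.star (.var 0), .star (.var 1)) (by simp [relations])
  have h3 : (![3, 3, 3, 0] : Fin 4 → Fin 4) (v 1) = 3 :=
    h (.plus (.var 1), .one) (by simp [relations])
  generalize v 0 = p at *
  generalize v 1 = q at *
  clear h
  revert p q
  decide

/-- The values of the eight terms at `(a, b)`. -/
theorem testTerm_mid (v : ℕ → Fin 4) (h0 : v 0 = 1) (h1 : v 1 = 2) (j : Fin 8) :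
    (testTerm j).eval dSalg v = (![0, 3, 0, 3, 1, 2, 1, 2] : Fin 8 → Fin 4) j := by
  fin_cases j <;> simp [testTerm, DSTerm.eval, dSalg, h0, h1]

/-- The values of the eight terms at `(0, 0)`. -/
theorem testTerm_zero (v : ℕ → Fin 4) (h0 : v 0 = 0) (h1 : v 1 = 0) (j : Fin 8) :
    (testTerm j).eval dSalg v = (![0, 3, 3, 0, 0, 0, 3, 3] : Fin 8 → Fin 4) j := by
  fin_cases j <;> simp [testTerm, DSTerm.eval, dSalg, h0, h1]

/-- Collapsing two distinct elements of `dS × 2` admissibly forces `x ≈ y`: a unifier of the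
relations is `(0, 0)` at the Boolean assignment, and if it is `(a, b)` at some other assignment,
these two assignments together already separate the eight terms. -/
theorem admissible_of_ne {j l : Fin 8} (hjl : j ≠ l) :
    DSAdmissible dSalg ((testTerm j, testTerm l) :: relations) (.var 0) (.var 1) := by
  intro s hs
  have hrel : ∀ w : ℕ → Fin 4, ∀ p ∈ relations,
      p.1.eval dSalg (fun n => (s n).eval dSalg w) =
        p.2.eval dSalg (fun n => (s n).eval dSalg w) := by
    intro w p hp
    exact (DSTerm.eval_subst dSalg s w p.1).symm.trans
      ((hs p (List.mem_cons_of_mem _ hp) w).trans (DSTerm.eval_subst dSalg s w p.2))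
  have htt : ∀ w : ℕ → Fin 4,
      (testTerm j).eval dSalg (fun n => (s n).eval dSalg w) =
        (testTerm l).eval dSalg (fun n => (s n).eval dSalg w) := by
    intro w
    exact (DSTerm.eval_subst dSalg s w _).symm.trans
      ((hs (testTerm j, testTerm l) List.mem_cons_self w).trans (DSTerm.eval_subst dSalg s w _))
  intro w
  by_contra hne
  obtain ⟨ha, hb⟩ := (relations_dS _ (hrel w)).2 hne
  have h0 := relations_dS _ (hrel fun _ => 0)
  have hy : (s 1).eval dSalg (fun _ => (0 : Fin 4)) = (0 : Fin 4) :=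
    (eval_zero_boolean (s 1)).resolve_right h0.1
  have hx : (s 0).eval dSalg (fun _ => (0 : Fin 4)) = (0 : Fin 4) := by
    by_contra hx
    have h := (h0.2 (fun e => hx (e.trans hy))).2
    rw [hy] at h
    exact absurd h (by decide)
  have e1 := (testTerm_mid _ ha hb j).symm.trans ((htt w).trans (testTerm_mid _ ha hb l))
  have e0 := (testTerm_zero _ hx hy j).symm.trans
    ((htt fun _ => 0).trans (testTerm_zero _ hx hy l))
  have hsep : ∀ j l : Fin 8, j ≠ l →
      (![0, 3, 0, 3, 1, 2, 1, 2] : Fin 8 → Fin 4) j = ![0, 3, 0, 3, 1, 2, 1, 2] l →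
      (![0, 3, 3, 0, 0, 0, 3, 3] : Fin 8 → Fin 4) j = ![0, 3, 3, 0, 0, 0, 3, 3] l →
      False := by decide
  exact hsep j l hjl e1 e0

/-- The term `t** ∧ t⁺`, which in `dS` is `1` if `t` is `a` or `b`, and `0` otherwise. -/
def midTerm (t : DSTerm ℕ) : DSTerm ℕ := .meet (.star (.star t)) (.plus t)

/-- The unifier of the relations given by `x = u ∧ v` and `y = u ∨ v` on the component where `u` and
`v` both lie in `{a, b}`, and `x = y = 0` on all other components. -/
def unifier (n : ℕ) : DSTerm ℕ :=
  .meet (.meet (midTerm (.var 0)) (midTerm (.var 1)))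
    (if n = 0 then .meet (.var 0) (.var 1) else .join (.var 0) (.var 1))

theorem not_admissible : ¬ DSAdmissible dSalg relations (.var 0) (.var 1) := by
  intro h
  -- `u = a`, `v = b` separates `u ∧ v` from `u ∨ v`
  have key := h unifier ?_ (fun n => if n = 0 then (1 : Fin 4) else (2 : Fin 4))
  · exact absurd key (by decide : ((1 : Fin 4) ≠ 2))
  · intro p hp w
    simp only [relations, List.mem_cons, List.not_mem_nil, or_false] at hp
    rcases hp with rfl | rfl | rfl <;>
      simp only [DSTerm.subst, unifier, midTerm, DSTerm.eval, if_true, one_ne_zero, if_false] <;>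
      generalize w 0 = p <;> generalize w 1 = q <;> revert p q <;> unfold dSalg <;> decide

theorem statement15 (k : ℕ) (B : Fin k → DSAlg)
    (hfin : ∀ i, Finite (B i).carrier)
    (htest : ∀ (Γ : List (DSTerm ℕ × DSTerm ℕ)) (φ ψ : DSTerm ℕ),
      (∀ i, DSQValid (B i) Γ φ ψ) ↔ DSAdmissible dSalg Γ φ ψ) :
    MultisetLE ({8} : Multiset ℕ)
      (↑(List.ofFn fun i => Nat.card (B i).carrier)) := by
  obtain ⟨i, hi⟩ : ∃ i, ¬ DSQValid (B i) relations (.var 0) (.var 1) := by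
    by_contra hcon
    push Not at hcon
    exact not_admissible ((htest _ _ _).1 hcon)
  unfold DSQValid at hi
  push Not at hi
  obtain ⟨v, hv, hne⟩ := hi
  have hinj : Function.Injective fun j => (testTerm j).eval (B i) v := by
    intro j l hjl
    by_contra hjl'
    refine hne ((htest _ _ _).2 (admissible_of_ne hjl') i v ?_)
    intro p hp
    rcases List.mem_cons.1 hp with rfl | hp
    · exact hjl
    · exact hv p hp
  have := hfin i
  have hcard : 8 ≤ Nat.card (B i).carrier := by
    simpa using Nat.card_le_card_of_injective _ hinj
  have hmem : Nat.card (B i).carrier ∈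
      ((List.ofFn fun i => Nat.card (B i).carrier : List ℕ) : Multiset ℕ) := by
    rw [Multiset.mem_coe, List.mem_ofFn]
    exact ⟨i, rfl⟩
  intro x hx
  have hx8 : x = 8 := by
    have : 0 < Multiset.count x ({8} : Multiset ℕ) := by omega
    simpa using Multiset.count_pos.1 this
  subst hx8
  have hpos := Multiset.count_pos.2 hmem
  rw [Multiset.count_singleton_self] at hx
  have hne8 : Nat.card (B i).carrier ≠ 8 := by
    intro h
    rw [h] at hpos
    omega
  refine ⟨Nat.card (B i).carrier, by omega, ?_⟩
  rw [Multiset.count_singleton, if_neg hne8]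
  exact hpos
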